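/- For every integer a ≥ 1, the double star P_2(1,4a) is cospectral to the graph B_a + (3a−2)K_1. Moreover, for every integer a ≥ 2, the three graphs P_2(1,4a), A_{2a} + (2a−1)K_1, and B_a + (3a−2)K_1 are pairwise cospectral and pairwise nonisomorphic; in particular P_2(1,4a) has at least two nonisomorphic cospectral mates. -/

import Mathlib

/-!
Each of the three graphs is bipartite with an adjacency matrix of the form
`p rᵀ + r pᵀ + q sᵀ + s qᵀ`, where `p, q` live on one colour class and `r, s` on the other. By
`charPoly_of_rank_four`, such a matrix of size `n` has characteristic polynomial
`X ^ (n - 4) * (X ^ 4 - t X ^ 2 + d)`, with `t` and `d` the trace and determinant of the product of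
the Gram matrices of `(p, q)` and `(r, s)`. In all three cases `n = 4a + 3`, `t = 4a + 2` and
`d = 4a`, which gives cospectrality.

The graphs are told apart by vertices of small degree: `P₂(1,4a)` has no isolated vertex while the
other two do, and `A_{2a}` has a vertex of degree one while `B_a + kK₁` has none when `a ≥ 2`.
-/

open Polynomial SimpleGraph

/-- Characteristic polynomial (over ℝ) of the adjacency matrix of a finite simple graph:
`det (x•I - A(G))`. -/
noncomputable def charPoly {V : Type} [Fintype V] [DecidableEq V] (G : SimpleGraph V) :
    Polynomial ℝ :=
  letI := Classical.decRel G.Adj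
  Matrix.charpoly (SimpleGraph.adjMatrix ℝ G)

/-- The double star `P₂(a,b)`: an edge whose two endpoints carry `a` and `b` pendant
leaves respectively.  `Sum.inl none` and `Sum.inr none` are the two centers. -/
def doubleStar (a b : ℕ) : SimpleGraph (Option (Fin a) ⊕ Option (Fin b)) :=
  SimpleGraph.fromRel fun x y =>
    (x = Sum.inl none ∧ (y = Sum.inr none ∨ ∃ i, y = Sum.inl (some i))) ∨
    (x = Sum.inr none ∧ ∃ j, y = Sum.inr (some j))

/-- Two finite graphs are cospectral if their adjacency matrices have the same
characteristic polynomial. -/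
def Cospectral {V W : Type} [Fintype V] [DecidableEq V] [Fintype W] [DecidableEq W]
    (G : SimpleGraph V) (H : SimpleGraph W) : Prop :=
  charPoly G = charPoly H

/-- A graph is determined by its spectrum (DS) if every finite graph cospectral to it is
isomorphic to it. -/
def IsDS {V : Type} [Fintype V] [DecidableEq V] (G : SimpleGraph V) : Prop :=
  ∀ (W : Type) (_ : Fintype W) (_ : DecidableEq W) (H : SimpleGraph W),
    Cospectral G H → Nonempty (G ≃g H)

/-- The graph `A_a`: `K_{2,a}` together with two new pendant vertices, both attached to the
fixed vertex `Sum.inl (Sum.inl 0)` of the partite set of size 2. -/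
def graphA (a : ℕ) : SimpleGraph ((Fin 2 ⊕ Fin a) ⊕ Fin 2) :=
  SimpleGraph.fromRel fun x y =>
    (∃ i j, x = Sum.inl (Sum.inl i) ∧ y = Sum.inl (Sum.inr j)) ∨
    (∃ k, x = Sum.inl (Sum.inl 0) ∧ y = Sum.inr k)

/-- The graph `B_a`: `K_{4,a}` together with one new vertex adjacent to exactly two of the
vertices of the partite set of size 4. -/
def graphB (a : ℕ) : SimpleGraph ((Fin 4 ⊕ Fin a) ⊕ Unit) :=
  SimpleGraph.fromRel fun x y =>
    (∃ i j, x = Sum.inl (Sum.inl i) ∧ y = Sum.inl (Sum.inr j)) ∨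
    (∃ i : Fin 4, i.val < 2 ∧ x = Sum.inl (Sum.inl i) ∧ y = Sum.inr ())

/-- The graph `R`: a 4-cycle `0-1-2-3-0` with pendant vertices `4` and `5` attached to the
adjacent cycle vertices `0` and `1` respectively. -/
def graphR : SimpleGraph (Fin 6) :=
  SimpleGraph.fromRel fun x y =>
    (x = 0 ∧ y = 1) ∨ (x = 1 ∧ y = 2) ∨ (x = 2 ∧ y = 3) ∨ (x = 3 ∧ y = 0) ∨
    (x = 0 ∧ y = 4) ∨ (x = 1 ∧ y = 5)

/-- If the adjacency matrix is `p rᵀ + r pᵀ + q sᵀ + s qᵀ` with `p, q` orthogonal to `r, s`, the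
characteristic polynomial is determined by the number of vertices together with the trace `t` and
the determinant `d` of the product of the Gram matrices of `(p, q)` and `(r, s)`. This is
`det (X - U V) = X ^ (n - 4) * det (X - V U)` for `U = [p r q s]` and `V = [r p s q]ᵀ`. -/
lemma charPoly_of_rank_four {V : Type} [Fintype V] [DecidableEq V] (G : SimpleGraph V)
    (p q r s : V → ℝ) (t d : ℝ)
    (hA : ∀ i j, (G.Adj i j → p i * r j + r i * p j + q i * s j + s i * q j = 1) ∧
      (¬ G.Adj i j → p i * r j + r i * p j + q i * s j + s i * q j = 0))
    (hpr : ∑ i, p i * r i = 0) (hps : ∑ i, p i * s i = 0)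
    (hqr : ∑ i, q i * r i = 0) (hqs : ∑ i, q i * s i = 0)
    (ht : (∑ i, p i * p i) * (∑ i, r i * r i) + 2 * (∑ i, p i * q i) * (∑ i, r i * s i)
      + (∑ i, q i * q i) * (∑ i, s i * s i) = t)
    (hd : ((∑ i, p i * p i) * (∑ i, q i * q i) - (∑ i, p i * q i) ^ 2)
      * ((∑ i, r i * r i) * (∑ i, s i * s i) - (∑ i, r i * s i) ^ 2) = d) :
    X ^ 4 * charPoly G = X ^ Fintype.card V * (X ^ 4 - C t * X ^ 2 + C d) := by
  classical
  set M : Matrix V (Fin 4) ℝ := Matrix.of fun i => ![p i, r i, q i, s i] with hM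
  set N : Matrix (Fin 4) V ℝ := Matrix.of ![r, p, s, q] with hN
  have hfac : (@SimpleGraph.adjMatrix ℝ V G (Classical.decRel G.Adj) _ _) = M * N := by
    ext i j
    rw [SimpleGraph.adjMatrix_apply]
    have := hA i j
    simp only [hM, hN, Matrix.mul_apply, Fin.sum_univ_four, Matrix.of_apply]
    split_ifs with h
    · exact (this.1 h).symm
    · exact (this.2 h).symm
  have hNM : N * M = !![0, ∑ i, r i * r i, 0, ∑ i, r i * s i;
      ∑ i, p i * p i, 0, ∑ i, p i * q i, 0;
      0, ∑ i, r i * s i, 0, ∑ i, s i * s i;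
      ∑ i, p i * q i, 0, ∑ i, q i * q i, 0] := by
    ext i j
    fin_cases i <;> fin_cases j <;> simp [hM, hN, Matrix.mul_apply] <;>
      first
        | assumption
        | (simp only [mul_comm]; done)
        | (simpa only [mul_comm] using hpr)
        | (simpa only [mul_comm] using hps)
        | (simpa only [mul_comm] using hqr)
        | (simpa only [mul_comm] using hqs)
  have key := Matrix.charpoly_mul_comm' M N
  rw [charPoly, hfac]
  rw [Fintype.card_fin] at key
  rw [key, hNM, ← ht, ← hd]
  congr 1
  simp only [Matrix.charpoly, Matrix.charmatrix, Matrix.det_succ_row_zero, Fin.sum_univ_succ]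
  simp [Fin.succAbove, Matrix.submatrix, Fin.lt_def, show (C (2 : ℝ)) = 2 from map_ofNat C 2]
  ring

/-- Let `u` and `v` be the centres carrying `1` and `4a` leaves. The colour classes of `P₂(1,4a)`
are {leaf of `u`, `v`} and {`u`, leaves of `v`}: here `p` and `q` are the indicators of the leaf of `u` and of `v`, and `r`, `s` those of their
neighbourhoods. -/
lemma charPoly_doubleStar (a : ℕ) :
    X ^ 4 * charPoly (doubleStar 1 (4 * a)) =
      X ^ (4 * a + 3) * (X ^ 4 - C (4 * a + 2 : ℝ) * X ^ 2 + C (4 * a : ℝ)) := by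
  rw [charPoly_of_rank_four (doubleStar 1 (4 * a))
    (Sum.elim (fun o => o.elim 0 1) 0)
    (Sum.elim 0 (fun o => o.elim 1 0))
    (Sum.elim (fun o => o.elim 1 0) 0)
    (Sum.elim (fun o => o.elim 1 0) (fun o => o.elim 0 1)) (4 * a + 2) (4 * a)]
  · congr 2
    simp
    ring
  · rintro ((_ | i) | (_ | i)) ((_ | j) | (_ | j)) <;> simp [doubleStar, Fin.fin_one_eq_zero]
  all_goals simp [Fintype.sum_sum_type, Fintype.sum_option]
  all_goals ring

/-- Here `p` and `q` are the indicators of the two vertices of the class of size 2, and `r`, `s`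
those of their neighbourhoods. -/
lemma charPoly_graphA (a : ℕ) (ha : 1 ≤ a) :
    X ^ 4 * charPoly (graphA (2 * a) ⊕g (⊥ : SimpleGraph (Fin (2 * a - 1)))) =
      X ^ (4 * a + 3) * (X ^ 4 - C (4 * a + 2 : ℝ) * X ^ 2 + C (4 * a : ℝ)) := by
  rw [charPoly_of_rank_four (graphA (2 * a) ⊕g (⊥ : SimpleGraph (Fin (2 * a - 1))))
    (Sum.elim (Sum.elim (Sum.elim ![1, 0] 0) 0) 0)
    (Sum.elim (Sum.elim (Sum.elim ![0, 1] 0) 0) 0)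
    (Sum.elim (Sum.elim (Sum.elim 0 1) 1) 0)
    (Sum.elim (Sum.elim (Sum.elim 0 1) 0) 0) (4 * a + 2) (4 * a)]
  · congr 2
    simp
    omega
  · rintro (((i | i) | i) | i) (((j | j) | j) | j) <;>
      first
        | (simp [graphA]; done)
        | (fin_cases i <;> fin_cases j <;> simp [graphA]; done)
        | (fin_cases i <;> simp [graphA]; done)
        | (fin_cases j <;> simp [graphA]; done)
  all_goals simp [Fintype.sum_sum_type, Fin.sum_univ_succ]
  all_goals ring

/-- Here `p` and `q` are the indicators of the class of size 4 and of the two vertices of it that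
are joined to the extra vertex, `r` is that of the class of size `a`, and `s` that of the extra
vertex. -/
lemma charPoly_graphB (a : ℕ) (ha : 1 ≤ a) :
    X ^ 4 * charPoly (graphB a ⊕g (⊥ : SimpleGraph (Fin (3 * a - 2)))) =
      X ^ (4 * a + 3) * (X ^ 4 - C (4 * a + 2 : ℝ) * X ^ 2 + C (4 * a : ℝ)) := by
  rw [charPoly_of_rank_four (graphB a ⊕g (⊥ : SimpleGraph (Fin (3 * a - 2))))
    (Sum.elim (Sum.elim (Sum.elim 1 0) 0) 0)
    (Sum.elim (Sum.elim (Sum.elim ![1, 1, 0, 0] 0) 0) 0)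
    (Sum.elim (Sum.elim (Sum.elim 0 1) 0) 0)
    (Sum.elim (Sum.elim (Sum.elim 0 0) 1) 0) (4 * a + 2) (4 * a)]
  · congr 2
    simp
    omega
  · rintro (((i | i) | i) | i) (((j | j) | j) | j) <;>
      first
        | (simp [graphB]; done)
        | (fin_cases i <;> simp [graphB]; done)
        | (fin_cases j <;> simp [graphB]; done)
  all_goals simp [Fintype.sum_sum_type, Fin.sum_univ_succ, -mul_eq_mul_right_iff]
  all_goals ring

lemma cospectral_of_X_pow {V W : Type} [Fintype V] [DecidableEq V] [Fintype W] [DecidableEq W]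
    {G : SimpleGraph V} {H : SimpleGraph W} {f : ℝ[X]}
    (hG : X ^ 4 * charPoly G = f) (hH : X ^ 4 * charPoly H = f) : Cospectral G H :=
  mul_left_cancel₀ (pow_ne_zero 4 X_ne_zero) (hG.trans hH.symm)

lemma doubleStar_exists_adj (a b : ℕ) (x) : ∃ y, (doubleStar a b).Adj x y := by
  rcases x with (_ | i) | (_ | j)
  · exact ⟨Sum.inr none, by simp [doubleStar]⟩
  · exact ⟨Sum.inl none, by simp [doubleStar]⟩
  · exact ⟨Sum.inl none, by simp [doubleStar]⟩
  · exact ⟨Sum.inr none, by simp [doubleStar]⟩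

lemma doubleStar_not_iso_sum_bot {W : Type} {a b k : ℕ} (hk : 0 < k) (H : SimpleGraph W) :
    ¬ Nonempty (doubleStar a b ≃g (H ⊕g (⊥ : SimpleGraph (Fin k)))) := by
  rintro ⟨e⟩
  obtain ⟨y, hy⟩ := doubleStar_exists_adj a b (e.symm (Sum.inr ⟨0, hk⟩))
  rw [← e.map_adj_iff, e.apply_symm_apply] at hy
  rcases h : e y with z | z <;> simp [h] at hy

/-- For `a ≥ 2` the graph `B_a + kK₁` has no vertex of degree one. -/
lemma graphB_no_leaf {a k : ℕ} (ha : 2 ≤ a) (x y)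
    (h : (graphB a ⊕g (⊥ : SimpleGraph (Fin k))).Adj x y) :
    ∃ z, z ≠ y ∧ (graphB a ⊕g (⊥ : SimpleGraph (Fin k))).Adj x z := by
  have : Nontrivial (Fin a) := Fin.nontrivial_iff_two_le.2 ha
  rcases x with ((i | i) | i) | i
  · rcases y with ((j | j) | j) | j
    · simp [graphB] at h
    · obtain ⟨j', hj⟩ := exists_ne j
      exact ⟨Sum.inl (Sum.inl (Sum.inr j')), by simpa using hj, by simp [graphB]⟩
    · exact ⟨Sum.inl (Sum.inl (Sum.inr ⟨0, by omega⟩)), by simp, by simp [graphB]⟩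
    · simp at h
  · rcases y with ((j | j) | j) | j
    · obtain ⟨j', hj⟩ := exists_ne j
      exact ⟨Sum.inl (Sum.inl (Sum.inl j')), by simpa using hj, by simp [graphB]⟩
    · simp [graphB] at h
    · simp [graphB] at h
    · simp at h
  · by_cases hy : y = Sum.inl (Sum.inl (Sum.inl 0))
    · exact ⟨Sum.inl (Sum.inl (Sum.inl 1)), by simp [hy], by simp [graphB]⟩
    · exact ⟨Sum.inl (Sum.inl (Sum.inl 0)), Ne.symm hy, by simp [graphB]⟩
  · rcases y with y | y <;> simp at h

lemma graphA_sum_not_iso_graphB_sum {a b k l : ℕ} (ha : 2 ≤ a) :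
    ¬ Nonempty ((graphA b ⊕g (⊥ : SimpleGraph (Fin k))) ≃g
      (graphB a ⊕g (⊥ : SimpleGraph (Fin l)))) := by
  rintro ⟨e⟩
  have hleaf : ∀ z, (graphA b ⊕g (⊥ : SimpleGraph (Fin k))).Adj (Sum.inl (Sum.inr 0)) z ↔
      z = Sum.inl (Sum.inl (Sum.inl 0)) := by
    rintro (((z | z) | z) | z) <;> simp [graphA]
  obtain ⟨z, hz, hadj⟩ := graphB_no_leaf ha _ _ (e.map_adj_iff.2 ((hleaf _).2 rfl))
  rw [← e.apply_symm_apply z, e.map_adj_iff, hleaf] at hadj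
  exact hz (by rw [← hadj, e.apply_symm_apply])

/-- for every `a ≥ 1`, `P₂(1,4a)` is cospectral to `B_a + (3a-2)K₁`; moreover
for every `a ≥ 2` the three graphs `P₂(1,4a)`, `A_{2a} + (2a-1)K₁`, and `B_a + (3a-2)K₁`
are pairwise cospectral and pairwise nonisomorphic. -/
theorem doubleStar_one_four_a :
    (∀ a : ℕ, 1 ≤ a →
      Cospectral (doubleStar 1 (4 * a)) (graphB a ⊕g (⊥ : SimpleGraph (Fin (3 * a - 2))))) ∧
    (∀ a : ℕ, 2 ≤ a →
      Cospectral (doubleStar 1 (4 * a))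
        (graphA (2 * a) ⊕g (⊥ : SimpleGraph (Fin (2 * a - 1)))) ∧
      Cospectral (doubleStar 1 (4 * a))
        (graphB a ⊕g (⊥ : SimpleGraph (Fin (3 * a - 2)))) ∧
      Cospectral (graphA (2 * a) ⊕g (⊥ : SimpleGraph (Fin (2 * a - 1))))
        (graphB a ⊕g (⊥ : SimpleGraph (Fin (3 * a - 2)))) ∧
      ¬ Nonempty (doubleStar 1 (4 * a) ≃g
        (graphA (2 * a) ⊕g (⊥ : SimpleGraph (Fin (2 * a - 1))))) ∧
      ¬ Nonempty (doubleStar 1 (4 * a) ≃g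
        (graphB a ⊕g (⊥ : SimpleGraph (Fin (3 * a - 2))))) ∧
      ¬ Nonempty ((graphA (2 * a) ⊕g (⊥ : SimpleGraph (Fin (2 * a - 1)))) ≃g
        (graphB a ⊕g (⊥ : SimpleGraph (Fin (3 * a - 2)))))) := by
  have hB : ∀ a : ℕ, 1 ≤ a → Cospectral (doubleStar 1 (4 * a))
      (graphB a ⊕g (⊥ : SimpleGraph (Fin (3 * a - 2)))) := fun a ha =>
    cospectral_of_X_pow (charPoly_doubleStar a) (charPoly_graphB a ha)
  refine ⟨hB, fun a ha => ⟨?_, hB a (by omega), ?_, ?_, ?_, ?_⟩⟩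
  · exact cospectral_of_X_pow (charPoly_doubleStar a) (charPoly_graphA a (by omega))
  · exact cospectral_of_X_pow (charPoly_graphA a (by omega)) (charPoly_graphB a (by omega))
  · exact doubleStar_not_iso_sum_bot (by omega) _
  · exact doubleStar_not_iso_sum_bot (by omega) _
  · exact graphA_sum_not_iso_graphB_sum ha
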